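/- Let X_n = (ℂ^n, ‖·‖) be an n-dimensional Banach space in which the standard unit vectors form a 1-unconditional basis, and let m ≥ 2. Then the Gordon–Lewis constant of the space of m-homogeneous polynomials satisfies gl(𝒫(^m X_n)) ≤ 2 · (m^m/m!)² · λ(𝒫(^{m-1} X_n)), where λ denotes the projection constant. -/

import Mathlib

open Finset MeasureTheory

/-- Coefficient space of `m`-homogeneous polynomials on `ℂ^n`: families of complex
numbers indexed by the multi-indices `α` with `|α| = m`. -/
abbrev Coef (n m : ℕ) :=
  { α : Fin n → ℕ // α ∈ Finset.Nat.antidiagonalTuple n m } → ℂ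

/-- Evaluation of the `m`-homogeneous polynomial `∑_{|α|=m} a_α z^α` at `z ∈ ℂ^n`. -/
noncomputable def evalC {n m : ℕ} (a : Coef n m) (z : Fin n → ℂ) : ℂ :=
  ∑ α : { α : Fin n → ℕ // α ∈ Finset.Nat.antidiagonalTuple n m },
    a α * ∏ i, z i ^ (α : Fin n → ℕ) i

/-- The norm of an `m`-homogeneous polynomial on `X = (ℂ^n, ν)`:
`‖P‖ = sup_{ν(z) ≤ 1} |P(z)|`. -/
noncomputable def polyNorm (n m : ℕ) (ν : (Fin n → ℂ) → ℝ) (a : Coef n m) : ℝ :=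
  sSup {x : ℝ | ∃ z : Fin n → ℂ, ν z ≤ 1 ∧ x = ‖evalC a z‖}

/-- The operator norm of a linear map `T : V → W` relative to given norms on `V`, `W`. -/
noncomputable def opNormWith {V W : Type*} [AddCommGroup V] [Module ℂ V]
    [AddCommGroup W] [Module ℂ W] (νV : V → ℝ) (νW : W → ℝ) (T : V →ₗ[ℂ] W) : ℝ :=
  sSup {x : ℝ | ∃ v, νV v ≤ 1 ∧ x = νW (T v)}

/-- The 1-summing norm `π₁(T)` of a linear map `T : V → W` relative to given norms
on `V`, `W`. -/
noncomputable def pi1With {V W : Type*} [AddCommGroup V] [Module ℂ V]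
    [AddCommGroup W] [Module ℂ W] (νV : V → ℝ) (νW : W → ℝ) (T : V →ₗ[ℂ] W) : ℝ :=
  sSup {s : ℝ | ∃ (N : ℕ) (v : Fin N → V),
    (∀ lam : Fin N → ℂ, (∀ i, ‖lam i‖ ≤ 1) → νV (∑ i, lam i • v i) ≤ 1) ∧
    s = ∑ i, νW (T (v i))}

/-- The Gordon–Lewis constant of `(V, νV)`: the smallest `c ≥ 0` such that every operator
`T : V → ℓ₂^k` factors as `T = S ∘ R` through some `L₁(μ)` with `‖R‖·‖S‖ ≤ c·π₁(T)`. -/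
noncomputable def glWith (V : Type*) [AddCommGroup V] [Module ℂ V] (νV : V → ℝ) : ℝ :=
  sInf {c : ℝ | 0 ≤ c ∧ ∀ (k : ℕ) (T : V →ₗ[ℂ] EuclideanSpace ℂ (Fin k)),
    ∃ (Ω : Type) (_ : MeasurableSpace Ω) (μ : Measure Ω)
      (R : V →ₗ[ℂ] Lp ℂ 1 μ) (S : Lp ℂ 1 μ →L[ℂ] EuclideanSpace ℂ (Fin k)),
      (∀ v, S (R v) = T v) ∧
      opNormWith νV (fun f => ‖f‖) R * ‖S‖
        ≤ c * pi1With νV (fun w => ‖w‖) T}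

/-- The projection constant of `(V, νV)`: the supremum, over all isometric linear
embeddings `I : V → Z` into Banach spaces `Z`, of the infimum of `‖P‖` over all bounded
linear projections `P` of `Z` onto `I(V)`. -/
noncomputable def projConstWith (V : Type*) [AddCommGroup V] [Module ℂ V]
    (νV : V → ℝ) : ℝ :=
  sSup {x : ℝ |
    ∃ (Z : Type) (_iZ : NormedAddCommGroup Z) (_iS : NormedSpace ℂ Z) (I : V →ₗ[ℂ] Z),
      (∀ v, ‖I v‖ = νV v) ∧
      x = sInf {c : ℝ | ∃ P : Z →L[ℂ] Z,
        (∀ v, P (I v) = I v) ∧ (∀ z, ∃ v, P z = I v) ∧ c = ‖P‖}}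

/-- The standing hypotheses on the norm. -/
structure UNorm (n : ℕ) (ν : (Fin n → ℂ) → ℝ) : Prop where
  hadd : ∀ z w, ν (z + w) ≤ ν z + ν w
  hsmul : ∀ (c : ℂ) (z), ν (c • z) = ‖c‖ * ν z
  hdef : ∀ z, ν z = 0 → z = 0
  huncond : ∀ (ε z : Fin n → ℂ), (∀ i, ‖ε i‖ ≤ 1) → ν (fun i => ε i * z i) ≤ ν z

section algebra

variable {n m : ℕ}

open MvPolynomial in
/-- The polynomial attached to a coefficient family. -/
noncomputable def toP (n m : ℕ) : Coef n m →ₗ[ℂ] MvPolynomial (Fin n) ℂ where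
  toFun a := ∑ α : { α : Fin n → ℕ // α ∈ Finset.Nat.antidiagonalTuple n m },
    monomial (Finsupp.equivFunOnFinite.symm (α : Fin n → ℕ)) (a α)
  map_add' a b := by simp [Finset.sum_add_distrib]
  map_smul' c a := by simp [Finset.smul_sum, MvPolynomial.smul_monomial]

/-- The coefficient family of a polynomial. -/
noncomputable def ofP (n m : ℕ) : MvPolynomial (Fin n) ℂ →ₗ[ℂ] Coef n m where
  toFun p := fun α => MvPolynomial.coeff (Finsupp.equivFunOnFinite.symm (α : Fin n → ℕ)) p
  map_add' a b := by ext; simp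
  map_smul' c a := by ext; simp

lemma toP_apply (a : Coef n m) : toP n m a =
    ∑ α : { α : Fin n → ℕ // α ∈ Finset.Nat.antidiagonalTuple n m },
    MvPolynomial.monomial (Finsupp.equivFunOnFinite.symm (α : Fin n → ℕ)) (a α) := rfl

lemma ofP_apply (p : MvPolynomial (Fin n) ℂ)
    (α : { α : Fin n → ℕ // α ∈ Finset.Nat.antidiagonalTuple n m }) : ofP n m p α =
    MvPolynomial.coeff (Finsupp.equivFunOnFinite.symm (α : Fin n → ℕ)) p := rfl

lemma eval_toP (a : Coef n m) (z : Fin n → ℂ) :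
    MvPolynomial.eval z (toP n m a) = evalC a z := by
  simp [toP_apply, evalC, MvPolynomial.eval_monomial, Finsupp.prod_fintype]

lemma ofP_toP (a : Coef n m) : ofP n m (toP n m a) = a := by
  ext α
  simp only [ofP_apply, toP_apply, MvPolynomial.coeff_sum,
    MvPolynomial.coeff_monomial, EmbeddingLike.apply_eq_iff_eq]
  rw [Finset.sum_eq_single α]
  · simp
  · intro b _ hb
    rw [if_neg]
    exact fun h => hb (Subtype.ext h)
  · simp

lemma toP_homog (a : Coef n m) : (toP n m a).IsHomogeneous m := by
  rw [toP_apply]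
  apply MvPolynomial.IsHomogeneous.sum
  intro α _
  apply MvPolynomial.isHomogeneous_monomial
  have := Finset.Nat.mem_antidiagonalTuple.1 α.2
  simpa [Finsupp.degree_eq_sum] using this

lemma toP_ofP (p : MvPolynomial (Fin n) ℂ) (hp : p.IsHomogeneous m) :
    toP n m (ofP n m p) = p := by
  ext d
  simp only [ofP_apply, toP_apply, MvPolynomial.coeff_sum,
    MvPolynomial.coeff_monomial]
  by_cases hd : (d : Fin n → ℕ) ∈ Finset.Nat.antidiagonalTuple n m
  · rw [Finset.sum_eq_single ⟨d, hd⟩]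
    · simp
    · intro b _ hb
      rw [if_neg]
      intro h
      apply hb
      apply Subtype.ext
      exact congrArg (fun e : Fin n →₀ ℕ => (e : Fin n → ℕ)) h
    · simp
  · rw [Finset.sum_eq_zero]
    · symm
      apply hp.coeff_eq_zero
      intro h
      apply hd
      rw [Finset.Nat.mem_antidiagonalTuple, ← h, Finsupp.degree_eq_sum]
    · intro b _
      rw [if_neg]
      intro h
      apply hd
      rw [← h]
      exact b.2

/-- `evalC` is linear in the coefficients. -/
noncomputable def evL (n m : ℕ) (z : Fin n → ℂ) : Coef n m →ₗ[ℂ] ℂ where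
  toFun a := evalC a z
  map_add' a b := by simp [evalC, add_mul, Finset.sum_add_distrib]
  map_smul' c a := by simp [evalC, Finset.mul_sum, mul_assoc]

lemma evL_apply (z : Fin n → ℂ) (a : Coef n m) : evL n m z a = evalC a z := rfl

lemma evalC_smul (a : Coef n m) (c : ℂ) (z : Fin n → ℂ) :
    evalC a (c • z) = c ^ m * evalC a z := by
  simp only [evalC, Pi.smul_apply, smul_eq_mul, mul_pow, Finset.prod_mul_distrib,
    Finset.mul_sum]
  apply Finset.sum_congr rfl
  intro α _
  rw [Finset.prod_pow_eq_pow_sum, Finset.Nat.mem_antidiagonalTuple.1 α.2]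
  ring

lemma coef_ext (a : Coef n m) (h : ∀ z, evalC a z = 0) : a = 0 := by
  have : toP n m a = 0 := by
    apply MvPolynomial.funext
    intro z
    rw [eval_toP, h]; simp
  rw [← ofP_toP a, this, map_zero]

/-- Multiplication by the `k`-th coordinate. -/
noncomputable def mulX (n m : ℕ) (k : Fin n) : Coef n (m - 1) →ₗ[ℂ] Coef n m :=
  ofP n m ∘ₗ (LinearMap.mulLeft ℂ (MvPolynomial.X k)) ∘ₗ toP n (m - 1)

/-- Normalised partial derivative. -/
noncomputable def dX (n m : ℕ) (k : Fin n) : Coef n m →ₗ[ℂ] Coef n (m - 1) :=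
  (m : ℂ)⁻¹ • (ofP n (m - 1) ∘ₗ (MvPolynomial.pderiv k).toLinearMap ∘ₗ toP n m)

lemma toP_mulX (hm : 1 ≤ m) (k : Fin n) (b : Coef n (m - 1)) :
    toP n m (mulX n m k b) = MvPolynomial.X k * toP n (m - 1) b := by
  simp only [mulX, LinearMap.coe_comp, Function.comp_apply, LinearMap.mulLeft_apply]
  apply toP_ofP
  have := (MvPolynomial.isHomogeneous_X ℂ k).mul (toP_homog b)
  rwa [Nat.add_sub_cancel' hm] at this

lemma toP_dX (k : Fin n) (a : Coef n m) :
    toP n (m - 1) (dX n m k a) = (m : ℂ)⁻¹ • MvPolynomial.pderiv k (toP n m a) := by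
  simp only [dX, LinearMap.smul_apply, LinearMap.coe_comp, Function.comp_apply, map_smul]
  congr 1
  exact toP_ofP _ (toP_homog a).pderiv

lemma evalC_mulX (hm : 1 ≤ m) (k : Fin n) (b : Coef n (m - 1)) (z : Fin n → ℂ) :
    evalC (mulX n m k b) z = z k * evalC b z := by
  rw [← eval_toP, toP_mulX hm, map_mul, eval_toP, MvPolynomial.eval_X]

lemma sum_mulX_dX (hm : 1 ≤ m) (a : Coef n m) :
    ∑ k, mulX n m k (dX n m k a) = a := by
  rw [← ofP_toP (∑ k, mulX n m k (dX n m k a)), map_sum]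
  conv_rhs => rw [← ofP_toP a]
  congr 1
  simp only [toP_mulX hm, toP_dX, mul_smul_comm]
  rw [← Finset.smul_sum, (toP_homog a).sum_X_mul_pderiv, ← Nat.cast_smul_eq_nsmul ℂ, smul_smul,
    inv_mul_cancel₀, one_smul]
  exact_mod_cast (by omega : m ≠ 0)

lemma hasDerivAt_line (p : MvPolynomial (Fin n) ℂ) (t x : Fin n → ℂ) (c : ℂ) :
    HasDerivAt (fun ζ : ℂ => MvPolynomial.eval (t + ζ • x) p)
      (∑ k, x k * MvPolynomial.eval (t + c • x) (MvPolynomial.pderiv k p)) c := by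
  induction p using MvPolynomial.induction_on with
  | C r => simpa using hasDerivAt_const c r
  | add p q hp hq =>
    simp only [map_add, mul_add, Finset.sum_add_distrib]
    exact hp.add hq
  | mul_X p i hp =>
    have h1 : HasDerivAt (fun ζ : ℂ => (t + ζ • x) i) (x i) c := by
      simpa using ((hasDerivAt_id c).mul_const (x i)).const_add (t i)
    simp only [map_mul, MvPolynomial.eval_X]
    refine HasDerivAt.congr_deriv (hp.mul h1) ?_
    simp only [Derivation.leibniz, MvPolynomial.pderiv_X, smul_eq_mul, map_add, map_mul,
      MvPolynomial.eval_X, mul_add, Finset.sum_add_distrib, Finset.sum_mul]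
    rw [add_comm]
    congr 1
    · rw [Finset.sum_eq_single i]
      · simp; ring
      · intro b _ hb; simp [Pi.single_apply, hb.symm]
      · simp
    · apply Finset.sum_congr rfl; intro k _; ring

lemma deriv_line (hm : 1 ≤ m) (a : Coef n m) (t x : Fin n → ℂ) :
    deriv (fun ζ : ℂ => evalC a (t + ζ • x)) 0 = m * ∑ k, x k * evalC (dX n m k a) t := by
  have h := (hasDerivAt_line (toP n m a) t x 0).deriv
  simp only [eval_toP] at h
  rw [h, Finset.mul_sum]
  apply Finset.sum_congr rfl
  intro k _
  rw [← eval_toP (dX n m k a), toP_dX]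
  have : (m : ℂ) ≠ 0 := by exact_mod_cast (by omega : m ≠ 0)
  simp
  field_simp

lemma differentiable_line (a : Coef n m) (t x : Fin n → ℂ) :
    Differentiable ℂ (fun ζ : ℂ => evalC a (t + ζ • x)) := by
  intro c
  have h := (hasDerivAt_line (toP n m a) t x c).differentiableAt
  simpa only [eval_toP] using h

end algebra
section norm

variable {n m : ℕ} {ν : (Fin n → ℂ) → ℝ}

lemma UNorm.zero (h : UNorm n ν) : ν 0 = 0 := by
  have := h.hsmul 0 0
  simpa using this

lemma UNorm.nonneg (h : UNorm n ν) (z) : 0 ≤ ν z := by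
  have h1 := h.hadd z ((-1 : ℂ) • z)
  rw [h.hsmul] at h1
  simp [h.zero] at h1
  linarith

lemma UNorm.bdd (h : UNorm n ν) : ∃ M : ℝ, 0 ≤ M ∧ ∀ z, ν z ≤ 1 → ∀ i, ‖z i‖ ≤ M := by
  refine ⟨∑ i, (ν (Pi.single i 1))⁻¹, Finset.sum_nonneg fun i _ => inv_nonneg.2 (h.nonneg _), ?_⟩
  intro z hz i
  have hpos : 0 < ν (Pi.single i 1) := by
    rcases (h.nonneg (Pi.single i 1)).lt_or_eq with h1 | h1
    · exact h1
    · have := congrFun (h.hdef _ h1.symm) i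
      simp at this
  have h2 : ν (fun j => (Pi.single i 1 : Fin n → ℂ) j * z j) ≤ ν z := by
    apply h.huncond
    intro j
    by_cases hj : j = i
    · subst hj; simp
    · simp [hj]
  have h3 : (fun j => (Pi.single i 1 : Fin n → ℂ) j * z j) = z i • Pi.single i (1 : ℂ) := by
    ext j
    by_cases hj : j = i
    · subst hj; simp
    · simp [hj]
  rw [h3, h.hsmul] at h2
  have h4 : ‖z i‖ ≤ (ν (Pi.single i 1))⁻¹ := by
    rw [← one_div, le_div_iff₀ hpos]; linarith
  exact h4.trans (Finset.single_le_sum (f := fun i => (ν (Pi.single i (1:ℂ)))⁻¹)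
    (fun i _ => inv_nonneg.2 (h.nonneg _)) (Finset.mem_univ i))

lemma UNorm.eval_bdd (h : UNorm n ν) (m : ℕ) : ∃ K : ℝ, 0 ≤ K ∧ ∀ (a : Coef n m) z, ν z ≤ 1 →
    ‖evalC a z‖ ≤ K * ‖a‖ := by
  obtain ⟨M, hM, hb⟩ := h.bdd
  refine ⟨∑ α : { α : Fin n → ℕ // α ∈ Finset.Nat.antidiagonalTuple n m },
    ∏ i, M ^ (α : Fin n → ℕ) i, by positivity, ?_⟩
  intro a z hz
  rw [evalC, Finset.sum_mul]
  refine (norm_sum_le _ _).trans (Finset.sum_le_sum fun α _ => ?_)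
  rw [norm_mul, mul_comm, norm_prod]
  gcongr with i _
  · rw [norm_pow]
    gcongr
    exact hb z hz i
  · exact norm_le_pi_norm a α

lemma UNorm.bddAbove (h : UNorm n ν) (a : Coef n m) :
    BddAbove {x : ℝ | ∃ z : Fin n → ℂ, ν z ≤ 1 ∧ x = ‖evalC a z‖} := by
  obtain ⟨K, hK, hb⟩ := h.eval_bdd m
  refine ⟨K * ‖a‖, ?_⟩
  rintro _ ⟨z, hz, rfl⟩
  exact hb a z hz

lemma UNorm.eval_le (h : UNorm n ν) (a : Coef n m) (z) (hz : ν z ≤ 1) :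
    ‖evalC a z‖ ≤ polyNorm n m ν a :=
  le_csSup (h.bddAbove a) ⟨z, hz, rfl⟩

lemma polyNorm_le (a : Coef n m) (C : ℝ) (hC : 0 ≤ C)
    (hb : ∀ z, ν z ≤ 1 → ‖evalC a z‖ ≤ C) : polyNorm n m ν a ≤ C := by
  apply Real.sSup_le _ hC
  rintro _ ⟨z, hz, rfl⟩
  exact hb z hz

lemma polyNorm_nonneg (a : Coef n m) : 0 ≤ polyNorm n m ν a := by
  apply Real.sSup_nonneg
  rintro _ ⟨z, hz, rfl⟩
  positivity

lemma UNorm.eval_le' (h : UNorm n ν) (a : Coef n m) (z) (r : ℝ) (hr : 0 < r) (hz : ν z ≤ r) :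
    ‖evalC a z‖ ≤ r ^ m * polyNorm n m ν a := by
  have h1 : z = (r : ℂ) • ((r : ℂ)⁻¹ • z) := by
    rw [smul_smul, mul_inv_cancel₀, one_smul]
    exact_mod_cast hr.ne'
  rw [h1, evalC_smul, norm_mul, norm_pow, Complex.norm_real, Real.norm_of_nonneg hr.le]
  gcongr
  apply h.eval_le
  rw [h.hsmul, norm_inv, Complex.norm_real, Real.norm_of_nonneg hr.le,
    inv_mul_le_iff₀ hr]
  linarith

/-- Evaluation on the unit ball as an embedding into `ℓ_∞`. -/
lemma UNorm.exists_embed (h : UNorm n ν) (m : ℕ) :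
    ∃ I : Coef n m →ₗ[ℂ] lp (fun _ : {z : Fin n → ℂ // ν z ≤ 1} => ℂ) ⊤,
      (∀ a x, I a x = evalC a x.1) ∧ (∀ a, ‖I a‖ = polyNorm n m ν a) ∧
      LinearMap.ker I = ⊥ := by
  let I : Coef n m →ₗ[ℂ] lp (fun _ : {z : Fin n → ℂ // ν z ≤ 1} => ℂ) ⊤ :=
    { toFun := fun a => ⟨fun x => evalC a x.1, memℓp_infty (by
        refine ⟨polyNorm n m ν a, ?_⟩
        rintro _ ⟨x, rfl⟩
        exact h.eval_le a x.1 x.2)⟩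
      map_add' := fun a b => by
        ext x
        exact (evL n m x.1).map_add a b
      map_smul' := fun c a => by
        ext x
        exact (evL n m x.1).map_smul c a }
  have hI : ∀ a x, I a x = evalC a x.1 := fun a x => rfl
  refine ⟨I, hI, ?_, ?_⟩
  · intro a
    apply le_antisymm
    · apply lp.norm_le_of_forall_le (polyNorm_nonneg a)
      intro x
      rw [hI]
      exact h.eval_le a x.1 x.2
    · apply polyNorm_le _ _ (norm_nonneg _)
      intro z hz
      have := lp.norm_apply_le_norm ENNReal.top_ne_zero (I a) ⟨z, hz⟩
      rwa [hI] at this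
  · rw [LinearMap.ker_eq_bot']
    intro a ha
    apply coef_ext
    have h0 : ∀ z, ν z ≤ 1 → evalC a z = 0 := by
      intro z hz
      rw [← hI a ⟨z, hz⟩, ha]; rfl
    intro z
    have hpos : 0 < ν z + 1 := by linarith [h.nonneg z]
    have h1 : z = ((ν z + 1 : ℝ) : ℂ) • (((ν z + 1 : ℝ) : ℂ)⁻¹ • z) := by
      rw [smul_smul, mul_inv_cancel₀, one_smul]
      exact_mod_cast hpos.ne'
    rw [h1, evalC_smul, h0, mul_zero]
    rw [h.hsmul, norm_inv, Complex.norm_real, Real.norm_of_nonneg hpos.le,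
      inv_mul_le_iff₀ hpos]
    linarith

lemma UNorm.coef_bdd (h : UNorm n ν) (m : ℕ) :
    ∃ K : ℝ, 0 ≤ K ∧ ∀ a : Coef n m, ‖a‖ ≤ K * polyNorm n m ν a := by
  obtain ⟨I, _, hI, hk⟩ := h.exists_embed m
  obtain ⟨K, _, hK⟩ := I.exists_antilipschitzWith hk
  refine ⟨K, K.2, fun a => ?_⟩
  rw [← hI]
  have := hK.le_mul_dist a 0
  simpa using this

lemma UNorm.polyNorm_smul (h : UNorm n ν) (c : ℂ) (a : Coef n m) :
    polyNorm n m ν (c • a) = ‖c‖ * polyNorm n m ν a := by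
  obtain ⟨I, _, hI, hk⟩ := h.exists_embed m
  rw [← hI, ← hI, map_smul, norm_smul]

/-- Finite norming set with constant 2. -/
lemma UNorm.exists_net (h : UNorm n ν) (m : ℕ) :
    ∃ s : Finset {z : Fin n → ℂ // ν z ≤ 1}, ∀ a : Coef n m, ∀ C : ℝ, 0 ≤ C →
      (∀ x ∈ s, ‖evalC a x.1‖ ≤ C) → polyNorm n m ν a ≤ 2 * C := by
  obtain ⟨I, hIa, hI, hk⟩ := h.exists_embed m
  have hIc : Continuous I := I.continuous_of_finiteDimensional
  have hcomp : IsCompact (Metric.sphere (0 : Coef n m) 1) := isCompact_sphere 0 1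
  let U : {z : Fin n → ℂ // ν z ≤ 1} → Set (Coef n m) :=
    fun x => {a | polyNorm n m ν a < 2 * ‖evalC a x.1‖}
  have hU : ∀ x, IsOpen (U x) := by
    intro x
    apply isOpen_lt
    · have : Continuous fun a => ‖I a‖ := hIc.norm
      simpa only [hI] using this
    · exact continuous_const.mul ((evL n m x.1).continuous_of_finiteDimensional.norm)
  have hpos : ∀ a : Coef n m, a ≠ 0 → 0 < polyNorm n m ν a := by
    intro a ha
    rw [← hI]
    rw [norm_pos_iff]
    intro h0
    exact ha ((LinearMap.ker_eq_bot'.1 hk) a h0)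
  have hcov : Metric.sphere (0 : Coef n m) 1 ⊆ ⋃ x, U x := by
    intro a ha
    have ha0 : a ≠ 0 := by
      rintro rfl
      simp at ha
    have hp := hpos a ha0
    by_contra hcon
    simp only [Set.mem_iUnion, not_exists, U, Set.mem_ofPred_eq, not_lt] at hcon
    have : polyNorm n m ν a ≤ polyNorm n m ν a / 2 := by
      apply polyNorm_le _ _ (by positivity)
      intro z hz
      have := hcon ⟨z, hz⟩
      simp only at this
      linarith
    linarith
  obtain ⟨s, hs⟩ := hcomp.elim_finite_subcover U hU hcov
  refine ⟨s, fun a C hC hb => ?_⟩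
  by_cases ha : a = 0
  · subst ha
    rw [← hI]; simp; exact hC
  have hna : 0 < ‖a‖ := norm_pos_iff.2 ha
  have hmem : ((‖a‖ : ℂ)⁻¹ • a) ∈ Metric.sphere (0 : Coef n m) 1 := by
    simp [norm_smul, hna.ne']
  obtain ⟨x, hx, hax⟩ := Set.mem_iUnion₂.1 (hs hmem)
  simp only [U, Set.mem_ofPred_eq] at hax
  rw [h.polyNorm_smul, ← evL_apply, map_smul, norm_smul, evL_apply] at hax
  have h1 : 0 < ‖(‖a‖ : ℂ)⁻¹‖ := by simp [hna]
  have h2 : polyNorm n m ν a < 2 * ‖evalC a x.1‖ := by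
    by_contra hc
    push Not at hc
    have := mul_le_mul_of_nonneg_left hc h1.le
    linarith
  have := hb x hx
  linarith

end norm
section main

variable {n m : ℕ} {ν : (Fin n → ℂ) → ℝ}

lemma UNorm.deriv_bound (h : UNorm n ν) (hm : 1 ≤ m) (a : Coef n m) (t x : Fin n → ℂ)
    (ht : ν t ≤ 1) (hx : ν x ≤ 1) :
    ‖∑ k, x k * evalC (dX n m k a) t‖ ≤ 3 * polyNorm n m ν a := by
  have hm0 : (0 : ℝ) < m := by exact_mod_cast hm
  have hp := polyNorm_nonneg (ν := ν) a
  have h1 : ‖deriv (fun ζ : ℂ => evalC a (t + ζ • x)) 0‖ ≤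
      (3 * polyNorm n m ν a) / (1 / m : ℝ) := by
    apply Complex.norm_deriv_le_of_forall_mem_sphere_norm_le (by positivity)
      (differentiable_line a t x).diffContOnCl
    intro ζ hζ
    have hζ' : ‖ζ‖ = 1 / m := by simpa using hζ
    have h2 : ν (t + ζ • x) ≤ 1 + 1 / m := by
      refine (h.hadd _ _).trans ?_
      rw [h.hsmul, hζ']
      have : 1 / (m : ℝ) * ν x ≤ 1 / m * 1 := by gcongr
      linarith
    refine (h.eval_le' a _ _ (by positivity) h2).trans ?_
    gcongr
    have h3 : (1 + 1 / (m : ℝ)) ^ m ≤ Real.exp 1 := by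
      have h4 : 1 + 1 / (m : ℝ) ≤ Real.exp (1 / m) := by
        linarith [Real.add_one_le_exp (1 / (m : ℝ))]
      calc (1 + 1 / (m : ℝ)) ^ m ≤ (Real.exp (1 / m)) ^ m := by gcongr
        _ = Real.exp 1 := by
          rw [← Real.exp_nat_mul]
          congr 1
          field_simp
    linarith [Real.exp_one_lt_d9]
  rw [deriv_line hm, norm_mul, Complex.norm_natCast, div_div_eq_mul_div, div_one,
    mul_comm] at h1
  exact le_of_mul_le_mul_right h1 hm0

lemma projSet_bdd (h : UNorm n ν) (m : ℕ) : BddAbove {x : ℝ |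
    ∃ (Z : Type) (_iZ : NormedAddCommGroup Z) (_iS : NormedSpace ℂ Z) (I : Coef n m →ₗ[ℂ] Z),
      (∀ v, ‖I v‖ = polyNorm n m ν v) ∧
      x = sInf {c : ℝ | ∃ P : Z →L[ℂ] Z,
        (∀ v, P (I v) = I v) ∧ (∀ z, ∃ v, P z = I v) ∧ c = ‖P‖}} := by
  obtain ⟨K, hK, hb⟩ := h.coef_bdd m
  refine ⟨∑ α, K * polyNorm n m ν (Pi.single α 1), ?_⟩
  rintro _ ⟨Z, iZ, iS, I, hI, rfl⟩
  have hinj : Function.Injective I := by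
    rw [← LinearMap.ker_eq_bot, LinearMap.ker_eq_bot']
    intro a ha
    have := hb a
    rw [← hI, ha, norm_zero, mul_zero] at this
    exact norm_le_zero_iff.1 this
  let e := LinearEquiv.ofInjective I hinj
  have hext : ∀ α, ∃ g : Z →L[ℂ] ℂ, (∀ v, g (I v) = v α) ∧ ‖g‖ ≤ K := by
    intro α
    let f0 : LinearMap.range I →ₗ[ℂ] ℂ := LinearMap.proj α ∘ₗ e.symm.toLinearMap
    have hf0 : ∀ x, ‖f0 x‖ ≤ K * ‖x‖ := by
      intro x
      obtain ⟨v, rfl⟩ := e.surjective x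
      have h1 : f0 (e v) = v α := by simp [f0]
      have h2 : ‖e v‖ = polyNorm n m ν v := by
        rw [← hI]; rfl
      rw [h1, h2]
      exact (norm_le_pi_norm v α).trans (hb v)
    obtain ⟨g, hg, hgn⟩ := exists_extension_norm_eq (𝕜 := ℂ) (LinearMap.range I)
      (f0.mkContinuous K hf0)
    refine ⟨g, fun v => ?_, hgn ▸ LinearMap.mkContinuous_norm_le _ hK _⟩
    have := hg (e v)
    have h1 : f0 (e v) = v α := by simp [f0]
    rw [LinearMap.mkContinuous_apply, h1] at this
    exact this
  choose g hg hgn using hext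
  let P : Z →L[ℂ] Z := ∑ α, (g α).smulRight (I (Pi.single α 1))
  have hP : ∀ z, P z = I (fun α => g α z) := by
    intro z
    simp only [P, _root_.sum_apply, ContinuousLinearMap.smulRight_apply]
    simp_rw [← map_smul, ← map_sum]
    congr 1
    ext β
    simp [Finset.sum_apply, Pi.single_apply]
  refine le_trans (csInf_le (a := ‖P‖) ⟨0, ?_⟩ ⟨P, ?_, ?_, rfl⟩) ?_
  · rintro _ ⟨P, _, _, rfl⟩; positivity
  · intro v
    rw [hP]
    simp only [hg]
  · intro z
    exact ⟨_, hP z⟩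
  · refine (norm_sum_le _ _).trans (Finset.sum_le_sum fun α _ => ?_)
    rw [ContinuousLinearMap.norm_smulRight_apply, hI]
    exact mul_le_mul_of_nonneg_right (hgn α) (polyNorm_nonneg _)

lemma projConst_nonneg : 0 ≤ projConstWith (Coef n m) (polyNorm n m ν) := by
  apply Real.sSup_nonneg
  rintro _ ⟨Z, iZ, iS, I, hI, rfl⟩
  apply Real.sInf_nonneg
  rintro _ ⟨P, _, _, rfl⟩
  positivity

lemma exists_W (h : UNorm n ν) (m : ℕ) (δ : ℝ) (hδ : 0 < δ) :
    ∃ (s : Finset {z : Fin n → ℂ // ν z ≤ 1}) (W : (s → ℂ) →ₗ[ℂ] Coef n m) (C : ℝ),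
      0 ≤ C ∧ C ≤ 2 * (projConstWith (Coef n m) (polyNorm n m ν) + δ) ∧
      (∀ y : Coef n m, W (fun j => evalC y j.1.1) = y) ∧
      ∀ z, polyNorm n m ν (W z) ≤ C * ‖z‖ := by
  obtain ⟨s, hs⟩ := h.exists_net (ν := ν) m
  obtain ⟨I, hIa, hI, hk⟩ := h.exists_embed m
  -- a good projection
  have hlt : sInf {c : ℝ | ∃ P : lp (fun _ : {z : Fin n → ℂ // ν z ≤ 1} => ℂ) ⊤ →L[ℂ]
        lp (fun _ : {z : Fin n → ℂ // ν z ≤ 1} => ℂ) ⊤,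
        (∀ v, P (I v) = I v) ∧ (∀ z, ∃ v, P z = I v) ∧ c = ‖P‖}
      < projConstWith (Coef n m) (polyNorm n m ν) + δ := by
    refine lt_of_le_of_lt (le_csSup (projSet_bdd h m) ⟨_, _, _, I, hI, rfl⟩) ?_
    unfold projConstWith
    linarith
  have hne : {c : ℝ | ∃ P : lp (fun _ : {z : Fin n → ℂ // ν z ≤ 1} => ℂ) ⊤ →L[ℂ]
        lp (fun _ : {z : Fin n → ℂ // ν z ≤ 1} => ℂ) ⊤,
        (∀ v, P (I v) = I v) ∧ (∀ z, ∃ v, P z = I v) ∧ c = ‖P‖}.Nonempty := by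
    obtain ⟨L, hL⟩ := Submodule.ClosedComplemented.of_finiteDimensional (LinearMap.range I)
    refine ⟨_, (LinearMap.range I).subtypeL ∘L L, fun v => ?_, fun z => ?_, rfl⟩
    · have := hL ⟨I v, LinearMap.mem_range_self I v⟩
      simp [this]
    · obtain ⟨v, hv⟩ := (L z).2
      exact ⟨v, hv.symm⟩
  obtain ⟨_, ⟨P, hP1, hP2, rfl⟩, hPlt⟩ := exists_lt_of_csInf_lt hne hlt
  -- the sampling map
  let A : Coef n m →ₗ[ℂ] (s → ℂ) := LinearMap.pi fun j => evL n m j.1.1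
  have hA : ∀ y j, A y j = evalC y j.1.1 := fun y j => rfl
  have hAn : ∀ y, polyNorm n m ν y ≤ 2 * ‖A y‖ := by
    intro y
    apply hs y _ (norm_nonneg _)
    intro x hx
    exact norm_le_pi_norm (A y) ⟨x, hx⟩
  have hinj : Function.Injective A := by
    rw [← LinearMap.ker_eq_bot, LinearMap.ker_eq_bot']
    intro a ha
    have h1 := hAn a
    rw [ha, norm_zero, mul_zero, ← hI, norm_le_zero_iff] at h1
    exact LinearMap.ker_eq_bot'.1 hk a h1
  let e := LinearEquiv.ofInjective A hinj
  have hext : ∀ x : {z : Fin n → ℂ // ν z ≤ 1},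
      ∃ g : (s → ℂ) →L[ℂ] ℂ, (∀ v, g (A v) = evalC v x.1) ∧ ‖g‖ ≤ 2 := by
    intro x
    let f0 : LinearMap.range A →ₗ[ℂ] ℂ := evL n m x.1 ∘ₗ e.symm.toLinearMap
    have hfe : ∀ v, f0 (e v) = evalC v x.1 := by
      intro v; simp [f0, evL_apply]
    have hf0 : ∀ x, ‖f0 x‖ ≤ 2 * ‖x‖ := by
      intro y
      obtain ⟨v, rfl⟩ := e.surjective y
      have h2 : ‖e v‖ = ‖A v‖ := rfl
      rw [hfe, h2]
      exact (h.eval_le v _ x.2).trans (hAn v)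
    obtain ⟨g, hg, hgn⟩ := exists_extension_norm_eq (𝕜 := ℂ) (LinearMap.range A)
      (f0.mkContinuous 2 hf0)
    refine ⟨g, fun v => ?_, hgn ▸ LinearMap.mkContinuous_norm_le _ (by norm_num) _⟩
    have := hg (e v)
    rw [LinearMap.mkContinuous_apply, hfe] at this
    exact this
  choose g hg hgn using hext
  have hgz : ∀ z x, ‖g x z‖ ≤ 2 * ‖z‖ := fun z x =>
    ((g x).le_opNorm z).trans (mul_le_mul_of_nonneg_right (hgn x) (norm_nonneg _))
  let E : (s → ℂ) →ₗ[ℂ] lp (fun _ : {z : Fin n → ℂ // ν z ≤ 1} => ℂ) ⊤ :=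
    { toFun := fun z => ⟨fun x => g x z, memℓp_infty (by
        refine ⟨2 * ‖z‖, ?_⟩
        rintro _ ⟨x, rfl⟩
        exact hgz z x)⟩
      map_add' := fun a b => by
        ext x
        exact (g x).map_add a b
      map_smul' := fun c a => by
        ext x
        exact (g x).map_smul c a }
  have hEx : ∀ z x, E z x = g x z := fun z x => rfl
  have hEn : ∀ z, ‖E z‖ ≤ 2 * ‖z‖ := by
    intro z
    apply lp.norm_le_of_forall_le (by positivity)
    intro x
    rw [hEx]; exact hgz z x
  have hEA : ∀ y, E (A y) = I y := by
    intro y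
    ext x
    rw [hEx, hg, hIa]
  obtain ⟨L, hL⟩ := I.exists_leftInverse_of_injective hk
  have hL' : ∀ v, L (I v) = v := fun v => LinearMap.congr_fun hL v
  refine ⟨s, L ∘ₗ P.toLinearMap ∘ₗ E, 2 * ‖P‖, by positivity, by linarith, ?_, ?_⟩
  · intro y
    have : (fun j : s => evalC y j.1.1) = A y := rfl
    rw [this]
    simp [hEA, hP1, hL']
  · intro z
    obtain ⟨v, hv⟩ := hP2 (E z)
    have h1 : (L ∘ₗ P.toLinearMap ∘ₗ E) z = v := by
      simp [hv, hL']
    rw [h1, ← hI, ← hv]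
    calc ‖P (E z)‖ ≤ ‖P‖ * ‖E z‖ := P.le_opNorm _
      _ ≤ ‖P‖ * (2 * ‖z‖) := by gcongr; exact hEn z
      _ = 2 * ‖P‖ * ‖z‖ := by ring

lemma pi1_bdd (h : UNorm n ν) {k : ℕ} (T : Coef n m →ₗ[ℂ] EuclideanSpace ℂ (Fin k)) :
    BddAbove {s : ℝ | ∃ (N : ℕ) (v : Fin N → Coef n m),
    (∀ lam : Fin N → ℂ, (∀ i, ‖lam i‖ ≤ 1) → polyNorm n m ν (∑ i, lam i • v i) ≤ 1) ∧
    s = ∑ i, ‖T (v i)‖} := by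
  obtain ⟨K, hK, hb⟩ := h.coef_bdd m
  refine ⟨∑ α, K * ‖T (Pi.single α 1)‖, ?_⟩
  rintro _ ⟨N, v, hv, rfl⟩
  have h1 : ∀ α, ∑ i, ‖v i α‖ ≤ K := by
    intro α
    let lam : Fin N → ℂ := fun i => (starRingEnd ℂ) (v i α) / ‖v i α‖
    have hl : ∀ i, ‖lam i‖ ≤ 1 := by
      intro i
      simp only [lam, norm_div, RCLike.norm_conj, Complex.norm_real, norm_norm]
      exact div_self_le_one _
    have hl2 : ∀ i, lam i * v i α = (‖v i α‖ : ℂ) := by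
      intro i
      by_cases h0 : v i α = 0
      · simp [h0]
      · have : (‖v i α‖ : ℂ) ≠ 0 := by exact_mod_cast (norm_pos_iff.2 h0).ne'
        simp only [lam]
        rw [div_mul_eq_mul_div, mul_comm, Complex.mul_conj', sq, mul_div_assoc, div_self this,
          mul_one]
    have h2 := hv lam hl
    have h3 := (norm_le_pi_norm (∑ i, lam i • v i) α).trans (hb _)
    have h4 : (∑ i, lam i • v i) α = ((∑ i, ‖v i α‖ : ℝ) : ℂ) := by
      simp [Finset.sum_apply, hl2]
    rw [h4, Complex.norm_real, Real.norm_of_nonneg (by positivity)] at h3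
    calc _ ≤ _ := h3
      _ ≤ K * 1 := by gcongr
      _ = K := mul_one K
  have h5 : ∀ w : Coef n m, ‖T w‖ ≤ ∑ α, ‖w α‖ * ‖T (Pi.single α 1)‖ := by
    intro w
    have : w = ∑ α, w α • (Pi.single α 1 : Coef n m) := by
      ext β
      simp [Finset.sum_apply, Pi.single_apply]
    conv_lhs => rw [this, map_sum]
    refine (norm_sum_le _ _).trans (Finset.sum_le_sum fun α _ => ?_)
    rw [map_smul, norm_smul]
  calc ∑ i, ‖T (v i)‖ ≤ ∑ i, ∑ α, ‖v i α‖ * ‖T (Pi.single α 1)‖ :=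
        Finset.sum_le_sum fun i _ => h5 (v i)
    _ = ∑ α, (∑ i, ‖v i α‖) * ‖T (Pi.single α 1)‖ := by
        rw [Finset.sum_comm]; simp_rw [Finset.sum_mul]
    _ ≤ _ := Finset.sum_le_sum fun α _ => mul_le_mul_of_nonneg_right (h1 α) (norm_nonneg _)

/-- Scaled form of the 1-summing inequality, for an arbitrary finite index type. -/
lemma pi1_ineq (h : UNorm n ν) {k : ℕ} (T : Coef n m →ₗ[ℂ] EuclideanSpace ℂ (Fin k))
    {ι : Type} [Fintype ι] (v : ι → Coef n m) (B : ℝ) (hB : 0 < B)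
    (hv : ∀ lam : ι → ℂ, (∀ i, ‖lam i‖ ≤ 1) → polyNorm n m ν (∑ i, lam i • v i) ≤ B) :
    ∑ i, ‖T (v i)‖ ≤ B * pi1With (polyNorm n m ν) (fun w => ‖w‖) T := by
  let e := Fintype.equivFin ι
  have hBn : ‖((B : ℂ))⁻¹‖ = B⁻¹ := by
    rw [norm_inv, Complex.norm_real, Real.norm_of_nonneg hB.le]
  have h1 : ∑ i : Fin (Fintype.card ι), ‖T ((B : ℂ)⁻¹ • v (e.symm i))‖ ≤
      pi1With (polyNorm n m ν) (fun w => ‖w‖) T := by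
    apply le_csSup (pi1_bdd h T)
    refine ⟨_, fun i => (B : ℂ)⁻¹ • v (e.symm i), ?_, rfl⟩
    intro lam hl
    have h2 : ∑ i, lam i • ((B : ℂ)⁻¹ • v (e.symm i)) = (B : ℂ)⁻¹ • ∑ i, lam (e i) • v i := by
      rw [Finset.smul_sum, ← e.symm.sum_comp (fun i => (B : ℂ)⁻¹ • lam (e i) • v i)]
      apply Finset.sum_congr rfl
      intro i _
      rw [e.apply_symm_apply, smul_comm]
    rw [h2, h.polyNorm_smul, hBn, inv_mul_le_iff₀ hB, mul_one]
    exact hv _ fun i => hl _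
  simp only [map_smul, norm_smul, hBn] at h1
  rw [← Finset.mul_sum, e.symm.sum_comp (fun i => ‖T (v i)‖), inv_mul_le_iff₀ hB] at h1
  exact h1

/-- Factorization through a finite-dimensional `ℓ₁`. -/
lemma factor_L1 {ι : Type} [Fintype ι] {k : ℕ} {V : Type*} [AddCommGroup V] [Module ℂ V]
    (φ : ι → V →ₗ[ℂ] ℂ) (w : ι → EuclideanSpace ℂ (Fin k)) :
    ∃ (Ω : Type) (_ : MeasurableSpace Ω) (μ : Measure Ω)
      (R : V →ₗ[ℂ] Lp ℂ 1 μ) (S : Lp ℂ 1 μ →L[ℂ] EuclideanSpace ℂ (Fin k)),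
      (∀ v, S (R v) = ∑ i, φ i v • w i) ∧ (∀ v, ‖R v‖ = ∑ i, ‖φ i v‖ * ‖w i‖) ∧ ‖S‖ ≤ 1 := by
  letI : MeasurableSpace ι := ⊤
  let μ : Measure ι := Measure.count
  have hmem : ∀ f : ι → ℂ, MemLp f 1 μ := fun f =>
    memLp_one_iff_integrable.2 (Integrable.of_finite)
  have hae : ∀ {f g : ι → ℂ}, f =ᵐ[μ] g → f = g := by
    intro f g hfg
    exact funext (Measure.ae_count_iff.1 hfg)
  let R : V →ₗ[ℂ] Lp ℂ 1 μ :=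
    { toFun := fun v => (hmem fun i => φ i v * (‖w i‖ : ℂ)).toLp _
      map_add' := fun a b => by
        rw [← MemLp.toLp_add]
        congr 1
        ext i
        simp [add_mul]
      map_smul' := fun c a => by
        rw [RingHom.id_apply, ← MemLp.toLp_const_smul]
        congr 1
        ext i
        simp [mul_assoc] }
  have hR : ∀ v i, (R v) i = φ i v * (‖w i‖ : ℂ) := by
    intro v i
    exact congrFun (hae (MemLp.coeFn_toLp (hmem fun i => φ i v * (‖w i‖ : ℂ)))) i
  have hnorm : ∀ f : Lp ℂ 1 μ, ‖f‖ = ∑ i, ‖f i‖ := by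
    intro f
    rw [L1.norm_eq_integral_norm]
    exact integral_count _
  let S0 : Lp ℂ 1 μ →ₗ[ℂ] EuclideanSpace ℂ (Fin k) :=
    { toFun := fun f => ∑ i, f i • ((‖w i‖ : ℂ)⁻¹ • w i)
      map_add' := fun f g => by
        rw [hae (Lp.coeFn_add f g)]
        simp [add_smul, Finset.sum_add_distrib]
      map_smul' := fun c f => by
        rw [hae (Lp.coeFn_smul c f), RingHom.id_apply, Finset.smul_sum]
        apply Finset.sum_congr rfl
        intro i _
        rw [Pi.smul_apply, smul_assoc] }
  have hS0 : ∀ f, ‖S0 f‖ ≤ 1 * ‖f‖ := by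
    intro f
    rw [one_mul, hnorm]
    refine (norm_sum_le _ _).trans (Finset.sum_le_sum fun i _ => ?_)
    rw [norm_smul, norm_smul, norm_inv, Complex.norm_real, norm_norm]
    exact mul_le_of_le_one_right (norm_nonneg _) (inv_mul_le_one)
  refine ⟨ι, inferInstance, μ, R, S0.mkContinuous 1 hS0, ?_, ?_,
    LinearMap.mkContinuous_norm_le _ zero_le_one _⟩
  · intro v
    rw [LinearMap.mkContinuous_apply]
    change ∑ i, (R v) i • ((‖w i‖ : ℂ)⁻¹ • w i) = _
    apply Finset.sum_congr rfl
    intro i _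
    rw [hR, smul_smul, mul_assoc]
    by_cases h0 : w i = 0
    · simp [h0]
    · have : (‖w i‖ : ℂ) ≠ 0 := by exact_mod_cast (norm_pos_iff.2 h0).ne'
      rw [mul_inv_cancel₀ this, mul_one]
  · intro v
    rw [hnorm]
    apply Finset.sum_congr rfl
    intro i _
    rw [hR, norm_mul, Complex.norm_real, norm_norm]

lemma gl_bound (h : UNorm n ν) (hm : 1 ≤ m) (δ : ℝ) (hδ : 0 < δ) :
    glWith (Coef n m) (polyNorm n m ν)
      ≤ 6 * (projConstWith (Coef n (m - 1)) (polyNorm n (m - 1) ν) + δ) := by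
  obtain ⟨s, W, C, hC, hCle, hW, hWn⟩ := exists_W h (m - 1) δ hδ
  have key : glWith (Coef n m) (polyNorm n m ν) ≤ 3 * C := by
    apply csInf_le ⟨0, fun c hc => hc.1⟩
    refine ⟨by positivity, ?_⟩
    intro k T
    let φ : Fin n × s → Coef n m →ₗ[ℂ] ℂ := fun p => evL n (m - 1) p.2.1.1 ∘ₗ dX n m p.1
    let u : Fin n × s → Coef n m := fun p => mulX n m p.1 (W (Pi.single p.2 1))
    have hWs : ∀ z : s → ℂ, W z = ∑ j, z j • W (Pi.single j 1) := by
      intro z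
      simp_rw [← map_smul, ← map_sum]
      congr 1
      ext j
      simp [Finset.sum_apply, Pi.single_apply]
    have hrec : ∀ a, ∑ p, φ p a • u p = a := by
      intro a
      rw [Fintype.sum_prod_type]
      conv_rhs => rw [← sum_mulX_dX hm a]
      apply Finset.sum_congr rfl
      intro i _
      conv_rhs => rw [← hW (dX n m i a), hWs, map_sum]
      apply Finset.sum_congr rfl
      intro j _
      rw [map_smul]
      rfl
    obtain ⟨Ω, mΩ, μ, R, S, h1, h2, h3⟩ := factor_L1 φ (fun p => T (u p))
    refine ⟨Ω, mΩ, μ, R, S, ?_, ?_⟩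
    · intro v
      rw [h1]
      conv_rhs => rw [← hrec v, map_sum]
      simp only [map_smul]
    have hpi : 0 ≤ pi1With (polyNorm n m ν) (fun w => ‖w‖) T := by
      apply Real.sSup_nonneg
      rintro _ ⟨N, v, _, rfl⟩
      positivity
    have hmain : ∀ (a : Coef n m), polyNorm n m ν a ≤ 1 → ∀ lam : Fin n × s → ℂ,
        (∀ p, ‖lam p‖ ≤ 1) → polyNorm n m ν (∑ p, lam p • φ p a • u p) ≤ 3 * C := by
      intro a ha lam hl
      apply polyNorm_le _ _ (by positivity)
      intro z hz
      let y : s → ℂ := fun j => ∑ i, z i * (lam (i, j) * φ (i, j) a)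
      have h4 : evalC (∑ p, lam p • φ p a • u p) z = evalC (W y) z := by
        rw [← evL_apply, ← evL_apply, hWs y]
        simp only [map_sum, map_smul, evL_apply, u, evalC_mulX hm]
        rw [Fintype.sum_prod_type, Finset.sum_comm]
        apply Finset.sum_congr rfl
        intro j _
        simp only [y, smul_eq_mul, Finset.sum_mul]
        apply Finset.sum_congr rfl
        intro i _
        ring
      have hy : ‖y‖ ≤ 3 := by
        rw [pi_norm_le_iff_of_nonneg (by norm_num)]
        intro j
        have h5 := h.deriv_bound hm a j.1.1 (fun i => lam (i, j) * z i) j.1.2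
          ((h.huncond (fun i => lam (i, j)) z fun i => hl _).trans hz)
        have h6 : y j = ∑ i, (lam (i, j) * z i) * evalC (dX n m i a) j.1.1 := by
          apply Finset.sum_congr rfl
          intro i _
          change z i * (lam (i, j) * evalC (dX n m i a) j.1.1) = _
          ring
        rw [h6]
        linarith
      rw [h4]
      calc ‖evalC (W y) z‖ ≤ polyNorm n (m - 1) ν (W y) := h.eval_le _ _ hz
        _ ≤ C * ‖y‖ := hWn y
        _ ≤ C * 3 := by gcongr
        _ = 3 * C := by ring
    have hRn : opNormWith (polyNorm n m ν) (fun f => ‖f‖) R ≤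
        3 * C * pi1With (polyNorm n m ν) (fun w => ‖w‖) T := by
      apply Real.sSup_le _ (by positivity)
      rintro _ ⟨a, ha, rfl⟩
      change ‖R a‖ ≤ _
      rw [h2]
      have h7 : ∀ η > 0, ∑ p, ‖φ p a‖ * ‖T (u p)‖ ≤
          (3 * C + η) * pi1With (polyNorm n m ν) (fun w => ‖w‖) T := by
        intro η hη
        have := pi1_ineq h T (fun p => φ p a • u p) (3 * C + η) (by positivity)
          (fun lam hl => (hmain a ha lam hl).trans (by linarith))
        simpa only [map_smul, norm_smul] using this
      have h8 : Filter.Tendsto (fun η : ℝ => (3 * C + η) *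
          pi1With (polyNorm n m ν) (fun w => ‖w‖) T) (nhdsWithin 0 (Set.Ioi 0))
          (nhds ((3 * C + 0) * pi1With (polyNorm n m ν) (fun w => ‖w‖) T)) := by
        apply Filter.Tendsto.mono_left _ nhdsWithin_le_nhds
        exact Continuous.tendsto (by fun_prop) 0
      rw [add_zero] at h8
      refine ge_of_tendsto h8 ?_
      filter_upwards [self_mem_nhdsWithin] with η hη
      exact h7 η hη
    calc opNormWith (polyNorm n m ν) (fun f => ‖f‖) R * ‖S‖
        ≤ (3 * C * pi1With (polyNorm n m ν) (fun w => ‖w‖) T) * 1 := by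
          apply mul_le_mul hRn h3 (norm_nonneg _) (by positivity)
      _ = _ := mul_one _
  linarith

lemma two_le_const (hm : 2 ≤ m) : (2 : ℝ) ≤ (m : ℝ) ^ m / (Nat.factorial m : ℝ) := by
  rw [le_div_iff₀ (by positivity)]
  have h1 : 2 * Nat.factorial m ≤ m ^ m := by
    induction m, hm using Nat.le_induction with
    | base => decide
    | succ j hj ih =>
      rw [Nat.factorial_succ, pow_succ]
      have h5 := Nat.pow_le_pow_left (Nat.le_succ j) j
      calc 2 * ((j + 1) * Nat.factorial j) = (2 * Nat.factorial j) * (j + 1) := by ring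
        _ ≤ (j + 1) ^ j * (j + 1) := Nat.mul_le_mul_right _ (ih.trans h5)
  exact_mod_cast h1

end main

/-- For `X_n = (ℂ^n, ν)` with 1-unconditional standard basis and `m ≥ 2`,
`gl(𝒫(^m X_n)) ≤ 2 · (m^m/m!)² · λ(𝒫(^{m-1} X_n))`. -/
theorem gl_le_projection_constant (n m : ℕ) (hn : 0 < n) (hm : 2 ≤ m)
    (ν : (Fin n → ℂ) → ℝ)
    (hadd : ∀ z w, ν (z + w) ≤ ν z + ν w)
    (hsmul : ∀ (c : ℂ) (z), ν (c • z) = ‖c‖ * ν z)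
    (hdef : ∀ z, ν z = 0 → z = 0)
    (huncond : ∀ (ε z : Fin n → ℂ), (∀ i, ‖ε i‖ ≤ 1) → ν (fun i => ε i * z i) ≤ ν z) :
    glWith (Coef n m) (polyNorm n m ν)
      ≤ 2 * ((m : ℝ) ^ m / (Nat.factorial m : ℝ)) ^ 2 *
          projConstWith (Coef n (m - 1)) (polyNorm n (m - 1) ν) := by
  have h : UNorm n ν := ⟨hadd, hsmul, hdef, huncond⟩
  have hnn := projConst_nonneg (n := n) (m := m - 1) (ν := ν)
  have h6 : glWith (Coef n m) (polyNorm n m ν)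
      ≤ 6 * projConstWith (Coef n (m - 1)) (polyNorm n (m - 1) ν) := by
    apply le_of_forall_pos_le_add
    intro ε hε
    have := gl_bound h (by omega : 1 ≤ m) (ε / 6) (by positivity)
    linarith
  have h2 := two_le_const hm
  have h4 : (6 : ℝ) ≤ 2 * ((m : ℝ) ^ m / (Nat.factorial m : ℝ)) ^ 2 := by nlinarith
  exact h6.trans (mul_le_mul_of_nonneg_right h4 hnn)
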